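/- arXiv:2503.22630 — 2 statements merged into one kernel-verified Lean document; each statement's English description precedes it below -/
import Mathlib

section
/- There exists a Sidon subset S of ℝ such that S + S = ℝ. -/
open Pointwise

def IsSidon {G : Type*} [AddCommGroup G] (S : Set G) : Prop :=
  ∀ a b c d : G, a ∈ S → b ∈ S → c ∈ S → d ∈ S → a + b = c + d →
    ({a, b} : Set G) = {c, d}

theorem span_ne_top_aux (T : Set ℝ) (hT : Cardinal.mk T < Cardinal.continuum) :
    ∃ x : ℝ, x ∉ Submodule.span ℚ T := by
  by_contra! h
  have hs : Function.Surjective (Finsupp.linearCombination ℚ (fun t : T => (t : ℝ))) := by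
    rw [← LinearMap.range_eq_top, Finsupp.range_linearCombination, Subtype.range_coe]
    exact Submodule.eq_top_iff'.2 h
  have h1 := Cardinal.mk_le_of_surjective hs
  rw [Cardinal.mk_real] at h1
  rcases isEmpty_or_nonempty T with hE | hE
  · have : Cardinal.mk (T →₀ ℚ) ≤ Cardinal.aleph0 := Cardinal.mk_le_aleph0
    exact absurd (h1.trans this) (not_le.2 Cardinal.aleph0_lt_continuum)
  · rw [Cardinal.mk_finsupp_of_infinite'] at h1
    refine absurd h1 (not_le.2 (max_lt hT ?_))
    simpa using Cardinal.aleph0_lt_continuum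

theorem sidon_extend_aux (T : Set ℝ) (r x : ℝ) (hT : IsSidon T) (hr : r ∉ T + T)
    (hx : x ∉ Submodule.span ℚ (insert r T)) : IsSidon (T ∪ {x, r - x}) := by
  obtain ⟨f, hfx, hf⟩ := Submodule.exists_le_ker_of_notMem hx
  have hfr : f r = 0 := hf (Submodule.subset_span (Set.mem_insert _ _))
  have hfT : ∀ t ∈ T, f t = 0 := fun t ht =>
    hf (Submodule.subset_span (Set.mem_insert_of_mem _ ht))
  have hfy : f (r - x) = - f x := by rw [map_sub, hfr, zero_sub]
  have hr' : ∀ a ∈ T, ∀ b ∈ T, a + b ≠ r := fun a ha b hb h =>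
    hr (Set.mem_add.2 ⟨a, ha, b, hb, h⟩)
  intro a b c d ha hb hc hd h
  have hh : f a + f b = f c + f d := by rw [← map_add, ← map_add, h]
  have key : (a = c ∧ b = d) ∨ (a = d ∧ b = c) → ({a, b} : Set ℝ) = {c, d} := by
    rintro (⟨rfl, rfl⟩ | ⟨rfl, rfl⟩)
    · rfl
    · exact Set.pair_comm _ _
  have cl : ∀ z ∈ T ∪ {x, r - x}, (z ∈ T ∧ f z = 0) ∨ (z = x ∧ f z = f x) ∨
      (z = r - x ∧ f z = - f x) := by
    rintro z (hz | rfl | rfl)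
    · exact Or.inl ⟨hz, hfT z hz⟩
    · exact Or.inr (Or.inl ⟨rfl, rfl⟩)
    · exact Or.inr (Or.inr ⟨rfl, hfy⟩)
  generalize f x = k at *
  have hk : k < 0 ∨ 0 < k := lt_or_gt_of_ne hfx
  rcases cl a ha with ⟨ha, fa⟩ | ⟨ha, fa⟩ | ⟨ha, fa⟩ <;>
  rcases cl b hb with ⟨hb, fb⟩ | ⟨hb, fb⟩ | ⟨hb, fb⟩ <;>
  rcases cl c hc with ⟨hc, fc⟩ | ⟨hc, fc⟩ | ⟨hc, fc⟩ <;>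
  rcases cl d hd with ⟨hd, fd⟩ | ⟨hd, fd⟩ | ⟨hd, fd⟩ <;>
  rw [fa, fb, fc, fd] at hh <;>
  first
  | exact hT a b c d ha hb hc hd h
  | (exfalso; rcases hk with hk | hk <;> linarith)
  | exact absurd (by linarith) (hr' a ha b hb)
  | exact absurd (by linarith) (hr' c hc d hd)
  | exact key (Or.inl ⟨by linarith, by linarith⟩)
  | exact key (Or.inr ⟨by linarith, by linarith⟩)

theorem sidon_step_aux (T : Set ℝ) (r : ℝ) : ∃ F : Set ℝ, F.Finite ∧
    (IsSidon T → Cardinal.mk T < Cardinal.continuum →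
      IsSidon (T ∪ F) ∧ r ∈ (T ∪ F) + (T ∪ F)) := by
  by_cases hr : r ∈ T + T
  · exact ⟨∅, Set.finite_empty, fun h _ => by simpa using ⟨h, hr⟩⟩
  by_cases hc : Cardinal.mk T < Cardinal.continuum
  · obtain ⟨x, hx⟩ := span_ne_top_aux (insert r T) (by
      refine Cardinal.mk_insert_le.trans_lt ?_
      exact Cardinal.add_lt_of_lt Cardinal.aleph0_le_continuum hc
        (Cardinal.one_lt_aleph0.trans Cardinal.aleph0_lt_continuum))
    refine ⟨{x, r - x}, Set.toFinite _, fun h _ => ⟨sidon_extend_aux T r x h hr hx, ?_⟩⟩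
    exact Set.mem_add.2 ⟨x, by simp, r - x, by simp, by ring⟩
  · exact ⟨∅, Set.finite_empty, fun _ h => absurd h hc⟩

theorem sidon_chain_aux {ι : Type} [LinearOrder ι] (I : Set ι) (Q : ι → Set ℝ)
    (hm : Monotone Q) (h : ∀ i ∈ I, IsSidon (Q i)) : IsSidon (⋃ i ∈ I, Q i) := by
  intro a b c d ha hb hc hd e
  simp only [Set.mem_iUnion, exists_prop] at ha hb hc hd
  obtain ⟨i, hi, ha⟩ := ha
  obtain ⟨j, hj, hb⟩ := hb
  obtain ⟨k, hk, hc⟩ := hc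
  obtain ⟨l, hl, hd⟩ := hd
  have hI : max (max i j) (max k l) ∈ I := by
    rcases max_choice (max i j) (max k l) with h | h <;> rw [h]
    · rcases max_choice i j with h | h <;> rw [h] <;> assumption
    · rcases max_choice k l with h | h <;> rw [h] <;> assumption
  exact h _ hI a b c d (hm (by simp) ha) (hm (by simp) hb) (hm (by simp) hc) (hm (by simp) hd) e

theorem sidon_main_aux {ι : Type} [LinearOrder ι] [WellFoundedLT ι] (e : ι → ℝ)
    (he : Function.Surjective e) (hc : ∀ i : ι, Cardinal.mk (Set.Iio i) < Cardinal.continuum) :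
    ∃ S : Set ℝ, IsSidon S ∧ S + S = Set.univ := by
  choose F hF1 hF2 using sidon_step_aux
  let P : ι → Set ℝ := (wellFounded_lt (α := ι)).fix
    (fun i rec => F (⋃ j : Set.Iio i, rec j.1 j.2) (e i))
  have hP : ∀ i, P i = F (⋃ j : Set.Iio i, P j.1) (e i) := fun i =>
    (wellFounded_lt (α := ι)).fix_eq _ i
  let T : ι → Set ℝ := fun i => ⋃ j : Set.Iio i, P j.1
  let Q : ι → Set ℝ := fun i => T i ∪ P i
  have hPf : ∀ i, (P i).Finite := fun i => by rw [hP]; exact hF1 _ _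
  have hTc : ∀ i, Cardinal.mk (T i) < Cardinal.continuum := by
    intro i
    refine (Cardinal.mk_iUnion_le _).trans_lt ?_
    refine Cardinal.mul_lt_of_lt Cardinal.aleph0_le_continuum (hc i) ?_
    refine lt_of_le_of_lt (ciSup_le' (a := Cardinal.aleph0) fun j => ?_)
      Cardinal.aleph0_lt_continuum
    exact (hPf j.1).countable.le_aleph0
  have hPQ : ∀ {i j}, i ≤ j → P i ⊆ Q j := by
    intro i j h
    rcases h.lt_or_eq with h | rfl
    · exact fun z hz => Or.inl (Set.mem_iUnion.2 ⟨⟨i, h⟩, hz⟩)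
    · exact Set.subset_union_right
  have hm : Monotone Q := by
    rintro i j h z (hz | hz)
    · obtain ⟨k, hk⟩ := Set.mem_iUnion.1 hz
      exact hPQ (k.2.le.trans h) hk
    · exact hPQ h hz
  have hTQ : ∀ i, T i = ⋃ j ∈ Set.Iio i, Q j := by
    intro i
    apply Set.Subset.antisymm
    · intro z hz
      obtain ⟨k, hk⟩ := Set.mem_iUnion.1 hz
      exact Set.mem_biUnion k.2 (hPQ le_rfl hk)
    · intro z hz
      simp only [Set.mem_iUnion, exists_prop] at hz
      obtain ⟨j, hj, hz | hz⟩ := hz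
      · obtain ⟨k, hk⟩ := Set.mem_iUnion.1 hz
        exact Set.mem_iUnion.2 ⟨⟨k.1, lt_trans k.2 hj⟩, hk⟩
      · exact Set.mem_iUnion.2 ⟨⟨j, hj⟩, hz⟩
  have hstep : ∀ i, IsSidon (T i) → IsSidon (Q i) ∧ e i ∈ Q i + Q i := by
    intro i h
    have := hF2 (T i) (e i) h (hTc i)
    rw [show F (T i) (e i) = P i from (hP i).symm] at this
    exact this
  have hT : ∀ i, IsSidon (T i) := by
    intro i
    induction i using WellFoundedLT.induction with
    | ind i ih =>
      rw [hTQ]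
      exact sidon_chain_aux _ Q hm fun j hj => (hstep j (ih j hj)).1
  refine ⟨⋃ i ∈ Set.univ, Q i, sidon_chain_aux _ Q hm fun j _ => (hstep j (hT j)).1, ?_⟩
  refine Set.eq_univ_of_forall fun r => ?_
  obtain ⟨i, rfl⟩ := he r
  have hs : Q i ⊆ ⋃ i ∈ Set.univ, Q i := Set.subset_biUnion_of_mem (u := Q) (Set.mem_univ i)
  exact Set.add_subset_add hs hs (hstep i (hT i)).2

/-- There exists a Sidon subset `S` of `ℝ` with `S + S = ℝ`. -/
theorem exists_sidon_real_full_sumset :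
    ∃ S : Set ℝ, IsSidon S ∧ S + S = Set.univ := by
  have h1 : Cardinal.mk (Set ℕ) = Cardinal.continuum := by simp
  obtain ⟨lo, wf, ho⟩ := Cardinal.exists_ord_eq_type_lt (ℕ → Bool)
  have h2 : Cardinal.mk (ℕ → Bool) = Cardinal.continuum := by simp
  have h3 : Cardinal.mk (ℕ → Bool) = Cardinal.mk ℝ := by rw [h2, Cardinal.mk_real]
  obtain ⟨e⟩ := Cardinal.eq.1 h3
  exact @sidon_main_aux (ℕ → Bool) lo wf e e.surjective fun i => by
    rw [← h2]
    exact @Cardinal.mk_Iio_lt _ lo wf i ho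
end

section
/- Assuming a well-ordering of ℝ, for every n ≥ 1 there exists a subset E of ℝⁿ with full outer Lebesgue measure (hence Hausdorff dimension n) avoiding repeated distances: for any points w, x, y, z ∈ E with {x,w} ≠ {y,z} (as unordered pairs of distinct points), ‖x − w‖ ≠ ‖y − z‖. -/
open MeasureTheory

/-- The moment curve. -/
noncomputable def momCurve (n : ℕ) (t : ℝ) : EuclideanSpace ℝ (Fin n) :=
  WithLp.toLp 2 (fun k => t ^ ((k : ℕ) + 1))

theorem momCurve_continuous (n : ℕ) : Continuous (momCurve n) := by
  unfold momCurve
  fun_prop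

/-- A polynomial for the squared distance along the moment curve. -/
noncomputable def dPoly {n : ℕ} (x w : EuclideanSpace ℝ (Fin n)) : Polynomial ℝ :=
  ∑ k : Fin n, (Polynomial.C (x k - w k) + Polynomial.X ^ ((k : ℕ) + 1)) ^ 2

theorem dPoly_eval {n : ℕ} (x w : EuclideanSpace ℝ (Fin n)) (t : ℝ) :
    (dPoly x w).eval t = dist (x + momCurve n t) w ^ 2 := by
  rw [EuclideanSpace.dist_eq, Real.sq_sqrt (by positivity)]
  simp only [dPoly, Polynomial.eval_finsetSum, Real.dist_eq, sq_abs]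
  refine Finset.sum_congr rfl fun k _ => ?_
  simp [momCurve]
  ring

theorem poly_finite (p : Polynomial ℝ) (hp : p ≠ 0) : {t : ℝ | p.eval t = 0}.Finite := by
  refine (p.roots.toFinset.finite_toSet).subset fun t ht => ?_
  simpa [hp] using ht

theorem sphere_finite {n : ℕ} (hn : 1 ≤ n) (x w : EuclideanSpace ℝ (Fin n)) (r : ℝ) :
    {t : ℝ | dist (x + momCurve n t) w = r}.Finite := by
  have hne : dPoly x w - Polynomial.C (r ^ 2) ≠ 0 := by
    intro h
    have h1 : ∀ t : ℝ, dist (x + momCurve n t) w ^ 2 = r ^ 2 := by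
      intro t
      have := congrArg (Polynomial.eval t) h
      simp only [Polynomial.eval_sub, dPoly_eval, Polynomial.eval_C, Polynomial.eval_zero] at this
      linarith
    have h2 : ∀ t : ℝ, (x ⟨0, hn⟩ + t - w ⟨0, hn⟩) ^ 2 ≤ r ^ 2 := by
      intro t
      rw [← h1 t, EuclideanSpace.dist_eq, Real.sq_sqrt (by positivity)]
      have := Finset.single_le_sum (s := Finset.univ)
        (f := fun k : Fin n => dist ((x + momCurve n t) k) (w k) ^ 2)
        (fun i _ => by positivity) (Finset.mem_univ ⟨0, hn⟩)
      refine le_trans (le_of_eq ?_) this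
      simp [momCurve, Real.dist_eq]
    have := h2 (w ⟨0, hn⟩ - x ⟨0, hn⟩ + (|r| + 1))
    have h3 : (|r| + 1) ^ 2 ≤ r ^ 2 := by
      convert this using 2
      ring
    nlinarith [sq_abs r, abs_nonneg r]
  refine (poly_finite _ hne).subset fun t ht => ?_
  simp only [Set.mem_ofPred_eq] at ht
  simp [dPoly_eval, ht]

/-- A polynomial for bisectors along the moment curve. -/
noncomputable def bPoly {n : ℕ} (x w z : EuclideanSpace ℝ (Fin n)) : Polynomial ℝ :=
  ∑ k : Fin n, (Polynomial.C (2 * (z k - w k)) * Polynomial.X ^ ((k : ℕ) + 1)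
    + Polynomial.C ((x k - w k) ^ 2 - (x k - z k) ^ 2))

theorem bPoly_eval {n : ℕ} (x w z : EuclideanSpace ℝ (Fin n)) (t : ℝ) :
    (bPoly x w z).eval t = (dPoly x w).eval t - (dPoly x z).eval t := by
  simp only [dPoly, bPoly, Polynomial.eval_finsetSum, ← Finset.sum_sub_distrib]
  refine Finset.sum_congr rfl fun k _ => ?_
  simp
  ring

theorem bisector_finite {n : ℕ} (x w z : EuclideanSpace ℝ (Fin n)) (hwz : w ≠ z) :
    {t : ℝ | dist (x + momCurve n t) w = dist (x + momCurve n t) z}.Finite := by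
  have hne : bPoly x w z ≠ 0 := by
    intro h
    apply hwz
    ext j
    have := congrArg (fun p => Polynomial.coeff p ((j : ℕ) + 1)) h
    simp only [bPoly, Polynomial.finsetSum_coeff, Polynomial.coeff_add, Polynomial.coeff_zero,
      Polynomial.coeff_C_mul, Polynomial.coeff_X_pow, Polynomial.coeff_C] at this
    rw [Finset.sum_eq_single j] at this
    · simp at this
      linarith
    · intro b _ hb
      have : (j : ℕ) ≠ b := fun h => hb (Fin.ext h.symm)
      simp [this]
    · simp
  refine (poly_finite _ hne).subset fun t ht => ?_
  simp only [Set.mem_ofPred_eq] at ht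
  simp [bPoly_eval, dPoly_eval, ht]

theorem exists_slice {n : ℕ} (F : Set (EuclideanSpace ℝ (Fin n))) (hF : IsClosed F)
    (hpos : volume F ≠ 0) :
    ∃ x, volume {t : ℝ | x + momCurve n t ∈ F} ≠ 0 := by
  by_contra! h
  have hc := momCurve_continuous n
  have hm : MeasurableSet {p : EuclideanSpace ℝ (Fin n) × ℝ | p.1 + momCurve n p.2 ∉ F} := by
    have : IsOpen {p : EuclideanSpace ℝ (Fin n) × ℝ | p.1 + momCurve n p.2 ∉ F} :=
      hF.isOpen_compl.preimage (f := fun p : EuclideanSpace ℝ (Fin n) × ℝ =>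
        p.1 + momCurve n p.2) (by fun_prop)
    exact this.measurableSet
  have h1 : ∀ᵐ x : EuclideanSpace ℝ (Fin n), ∀ᵐ t : ℝ, x + momCurve n t ∉ F := by
    refine Filter.Eventually.of_forall fun x => ?_
    rw [ae_iff]
    simpa using h x
  rw [Measure.ae_ae_comm (p := fun x t => x + momCurve n t ∉ F) hm] at h1
  obtain ⟨t, ht⟩ := h1.exists
  rw [ae_iff] at ht
  apply hpos
  have h2 := measure_preimage_add_right (volume : Measure (EuclideanSpace ℝ (Fin n)))
    (momCurve n t) F
  rw [← h2]
  simp only [not_not] at ht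
  exact ht

theorem key {n : ℕ} (hn : 1 ≤ n) (F A : Set (EuclideanSpace ℝ (Fin n))) (hF : IsClosed F)
    (hpos : volume F ≠ 0) (hA : Cardinal.mk A < Cardinal.continuum) :
    ∃ v ∈ F, ∀ w ∈ A, ∀ y ∈ A, ∀ z ∈ A,
      dist v w ≠ dist y z ∧ (w ≠ z → dist v w ≠ dist v z) := by
  obtain ⟨x, hx⟩ := exists_slice F hF hpos
  set T := {t : ℝ | x + momCurve n t ∈ F} with hT
  have hTc : IsClosed T := hF.preimage (f := fun t => x + momCurve n t)
    (continuous_const.add (momCurve_continuous n))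
  have hTu : ¬ T.Countable := fun h => hx (h.measure_zero _)
  obtain ⟨f, hfT, -, hfi⟩ := hTc.exists_nat_bool_injection_of_not_countable hTu
  have hcard : Cardinal.continuum ≤ Cardinal.mk T := by
    have h1 := Cardinal.mk_le_of_injective
      (f := fun a => (⟨f a, hfT ⟨a, rfl⟩⟩ : T)) (fun a b h => hfi (by simpa using h))
    simpa using h1
  let S : A × A × A → Set ℝ := fun p =>
    {t | dist (x + momCurve n t) p.1 = dist p.2.1 p.2.2} ∪
    {t | (p.1 : EuclideanSpace ℝ (Fin n)) ≠ p.2.2 ∧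
      dist (x + momCurve n t) p.1 = dist (x + momCurve n t) p.2.2}
  have hS : ∀ p, (S p).Finite := by
    intro p
    refine (sphere_finite hn _ _ _).union ?_
    by_cases h : (p.1 : EuclideanSpace ℝ (Fin n)) = p.2.2
    · simp [h]
    · exact (bisector_finite x _ _ h).subset fun t ht => ht.2
  have hU : Cardinal.mk (⋃ p, S p) < Cardinal.continuum := by
    refine (Cardinal.mk_iUnion_le S).trans_lt ?_
    have h3 : (⨆ p, Cardinal.mk (S p)) ≤ Cardinal.aleph0 :=
      ciSup_le' fun p => (Cardinal.lt_aleph0_iff_set_finite.2 (hS p)).le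
    have hc := Cardinal.aleph0_le_continuum
    refine Cardinal.mul_lt_of_lt hc ?_ (h3.trans_lt Cardinal.aleph0_lt_continuum)
    simp only [Cardinal.mk_prod, Cardinal.lift_id]
    exact Cardinal.mul_lt_of_lt hc hA (Cardinal.mul_lt_of_lt hc hA hA)
  have hns : ¬ T ⊆ ⋃ p, S p := fun h =>
    absurd (Cardinal.mk_le_mk_of_subset h) (not_le.2 (hU.trans_le hcard))
  obtain ⟨t, htT, htS⟩ := Set.not_subset.1 hns
  refine ⟨x + momCurve n t, htT, fun w hw y hy z hz => ⟨fun h => ?_, fun hwz h => ?_⟩⟩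
  · exact htS (Set.mem_iUnion.2 ⟨(⟨w, hw⟩, ⟨y, hy⟩, ⟨z, hz⟩), Or.inl h⟩)
  · exact htS (Set.mem_iUnion.2 ⟨(⟨w, hw⟩, ⟨y, hy⟩, ⟨z, hz⟩), Or.inr ⟨hwz, h⟩⟩)

theorem exists_set {n : ℕ} (hn : 1 ≤ n) :
    ∃ E : Set (EuclideanSpace ℝ (Fin n)),
      (∀ F : Set (EuclideanSpace ℝ (Fin n)), IsClosed F → volume F ≠ 0 → (F ∩ E).Nonempty) ∧
      ∀ w ∈ E, ∀ x ∈ E, ∀ y ∈ E, ∀ z ∈ E, x ≠ w → y ≠ z →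
        ({x, w} : Set (EuclideanSpace ℝ (Fin n))) ≠ {y, z} → dist x w ≠ dist y z := by
  let ι := {F : Set (EuclideanSpace ℝ (Fin n)) // IsClosed F ∧ volume F ≠ 0}
  have hι : Cardinal.mk ι ≤ Cardinal.continuum := by
    obtain ⟨b, hbc, hb⟩ := MeasurableSpace.CountablyGenerated.isCountablyGenerated
      (α := EuclideanSpace ℝ (Fin n))
    have h1 := MeasurableSpace.cardinal_measurableSet_le_continuum (s := b)
      ((Cardinal.le_aleph0_iff_set_countable.2 hbc).trans Cardinal.aleph0_le_continuum)
    rw [← hb] at h1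
    refine le_trans ?_ h1
    exact Cardinal.mk_le_mk_of_subset (s := {F | IsClosed F ∧ volume F ≠ 0})
      fun F hF => hF.1.measurableSet
  obtain ⟨r, hr, hord⟩ := Cardinal.ord_eq ι
  have hseg : ∀ i : ι, Cardinal.mk {j // r j i} < Cardinal.continuum := by
    intro i
    have := Ordinal.card_typein (r := r) i
    rw [← this]
    exact (Cardinal.card_typein_lt i hord).trans_le hι
  have hex : ∀ (i : ι) (A : Set (EuclideanSpace ℝ (Fin n))), ∃ v : EuclideanSpace ℝ (Fin n),
      Cardinal.mk A < Cardinal.continuum → v ∈ i.1 ∧ ∀ w ∈ A, ∀ y ∈ A, ∀ z ∈ A,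
      dist v w ≠ dist y z ∧ (w ≠ z → dist v w ≠ dist v z) := by
    intro i A
    by_cases hA : Cardinal.mk A < Cardinal.continuum
    · obtain ⟨v, hv⟩ := key hn i.1 A i.2.1 i.2.2 hA
      exact ⟨v, fun _ => hv⟩
    · exact ⟨0, fun h => absurd h hA⟩
  choose g hg using hex
  have hwf : WellFounded r := hr.wf
  let f : ι → EuclideanSpace ℝ (Fin n) :=
    hwf.fix fun i rec => g i (Set.range fun j : {j // r j i} => rec j.1 j.2)
  have hf : ∀ i, f i = g i (Set.range fun j : {j // r j i} => f j.1) :=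
    fun i => hwf.fix_eq _ i
  have hP : ∀ i, f i ∈ i.1 ∧ ∀ a, r a i → ∀ b, r b i → ∀ c, r c i →
      dist (f i) (f a) ≠ dist (f b) (f c) ∧
        (f a ≠ f c → dist (f i) (f a) ≠ dist (f i) (f c)) := by
    intro i
    have h := hg i (Set.range fun j : {j // r j i} => f j.1)
      (Cardinal.mk_range_le.trans_lt (hseg i))
    rw [← hf i] at h
    exact ⟨h.1, fun a ha b hb c hc =>
      h.2 _ ⟨⟨a, ha⟩, rfl⟩ _ ⟨⟨b, hb⟩, rfl⟩ _ ⟨⟨c, hc⟩, rfl⟩⟩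
  have tri : ∀ a b : ι, f a ≠ f b → r a b ∨ r b a := by
    intro a b hab
    rcases trichotomous_of r a b with h | h | h
    · exact Or.inl h
    · exact absurd (congrArg f h) hab
    · exact Or.inr h
  -- ordered version
  have main : ∀ a b c d : ι, r a b → r d c → (f b = f c → f a ≠ f d) →
      dist (f b) (f a) ≠ dist (f c) (f d) := by
    intro a b c d hab hdc hne
    rcases trichotomous_of r c b with h | h | h
    · exact ((hP b).2 a hab c h d (_root_.trans hdc h)).1
    · subst h
      exact ((hP c).2 a hab a hab d hdc).2 (hne rfl)
    · exact ((hP c).2 d hdc b h a (_root_.trans hab h)).1.symm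
  refine ⟨Set.range f, fun F hF hpos => ⟨f ⟨F, hF, hpos⟩, (hP ⟨F, hF, hpos⟩).1, _, rfl⟩, ?_⟩
  rintro _ ⟨a, rfl⟩ _ ⟨b, rfl⟩ _ ⟨c, rfl⟩ _ ⟨d, rfl⟩ hba hcd hne
  have e1 : f b = f c → f a ≠ f d := fun h1 h2 => hne (by rw [h1, h2])
  have e2 : f b = f d → f a ≠ f c := fun h1 h2 => hne (by rw [h1, h2, Set.pair_comm])
  rcases tri b a hba with h1 | h1 <;> rcases tri c d hcd with h2 | h2
  · rw [dist_comm, dist_comm (f c)]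
    exact main b a d c h1 h2 fun h h' => e1 h' h
  · rw [dist_comm]
    exact main b a c d h1 h2 fun h h' => e2 h' h
  · rw [dist_comm (f c)]
    exact main a b d c h1 h2 e2
  · exact main a b c d h1 h2 e1

/-- For every `n ≥ 1` there is a subset `E` of `ℝⁿ` of full outer Lebesgue measure (its
complement has inner measure zero), hence of Hausdorff dimension `n`, avoiding repeated
distances: distinct unordered pairs of distinct points of `E` realize distinct
distances. -/
theorem exists_full_outer_no_repeated_distance (n : ℕ) (hn : 1 ≤ n) :
    ∃ E : Set (EuclideanSpace ℝ (Fin n)),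
      (⨆ (F : Set (EuclideanSpace ℝ (Fin n))) (_ : IsClosed F ∧ F ⊆ Eᶜ), volume F) = 0 ∧
      dimH E = n ∧
      ∀ w ∈ E, ∀ x ∈ E, ∀ y ∈ E, ∀ z ∈ E, x ≠ w → y ≠ z →
        ({x, w} : Set (EuclideanSpace ℝ (Fin n))) ≠ {y, z} → dist x w ≠ dist y z := by
  obtain ⟨E, hE, hd⟩ := exists_set hn
  have hv : volume E ≠ 0 := by
    intro h0
    obtain ⟨t, hEt, ht, ht0⟩ := exists_measurable_superset_of_null h0
    have hb : volume (Metric.ball (0 : EuclideanSpace ℝ (Fin n)) 1 \ t) =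
        volume (Metric.ball (0 : EuclideanSpace ℝ (Fin n)) 1) := measure_sdiff_null ht0
    have hlt : 0 < volume (Metric.ball (0 : EuclideanSpace ℝ (Fin n)) 1 \ t) := by
      rw [hb]
      exact Metric.measure_ball_pos _ _ one_pos
    have hfin : volume (Metric.ball (0 : EuclideanSpace ℝ (Fin n)) 1 \ t) ≠ ⊤ := by
      rw [hb]
      exact measure_ball_lt_top.ne
    obtain ⟨K, hKs, hK, hKp⟩ :=
      (measurableSet_ball.diff ht).exists_lt_isClosed_of_ne_top hfin hlt
    obtain ⟨v, hvK, hvE⟩ := hE K hK hKp.ne'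
    exact (hKs hvK).2 (hEt hvE)
  refine ⟨E, ?_, ?_, hd⟩
  · simp only [ENNReal.iSup_eq_zero]
    rintro F ⟨hF, hFE⟩
    by_contra h
    obtain ⟨v, hvF, hvE⟩ := hE F hF h
    exact hFE hvF hvE
  · apply le_antisymm
    · refine (dimH_mono (Set.subset_univ E)).trans (le_of_eq ?_)
      rw [Real.dimH_univ_eq_finrank]
      simp
    · have : Measure.hausdorffMeasure ((n : NNReal) : ℝ) E ≠ 0 := by
        intro h0
        apply hv
        rw [← EuclideanSpace.euclideanHausdorffMeasure_eq_volume,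
          Measure.euclideanHausdorffMeasure_def, Measure.smul_apply]
        have h0' : Measure.hausdorffMeasure (n : ℝ) E = 0 := by simpa using h0
        rw [h0']
        simp
      simpa using le_dimH_of_hausdorffMeasure_ne_zero this
end
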